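/- Let G be a geometric graph on a set of n points in convex position with e edges, and suppose e ≥ (9/2)·n. Then the number of crossings of G (the number of unordered pairs of edges of G that cross) is at least (20/243)·e³/n². -/

import Mathlib

/-- Points of the plane. -/
abbrev Pt : Type := ℝ × ℝ

/-- A finite point set is in general position if no three of its points are collinear. -/
def GenPos (P : Finset Pt) : Prop :=
  ∀ p ∈ P, ∀ q ∈ P, ∀ r ∈ P, p ≠ q → p ≠ r → q ≠ r →
    ¬ Collinear ℝ ({p, q, r} : Set Pt)

/-- A finite point set is in convex position: general position and no point lies in the
convex hull of the others. -/
def ConvexPos (P : Finset Pt) : Prop :=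
  GenPos P ∧ ∀ p ∈ P, p ∉ convexHull ℝ ((P.erase p : Finset Pt) : Set Pt)

/-- The edge set of the complete geometric graph on `P`: all unordered pairs of
distinct points of `P`. -/
def KEdges (P : Finset Pt) : Set (Sym2 Pt) :=
  {e | ∃ p ∈ P, ∃ q ∈ P, p ≠ q ∧ e = s(p, q)}

/-- Two edges cross: they share no endpoint and their open segments intersect. -/
def Cross (e f : Sym2 Pt) : Prop :=
  (∀ x, x ∈ e → x ∉ f) ∧
    ∃ p q r s : Pt, e = s(p, q) ∧ f = s(r, s) ∧
      (openSegment ℝ p q ∩ openSegment ℝ r s).Nonempty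

/-- A set of edges is `k`-plane if each of its edges crosses at most `k` other edges
of the set. -/
def KPlane (k : ℕ) (E : Set (Sym2 Pt)) : Prop :=
  ∀ e ∈ E, {f | f ∈ E ∧ Cross e f}.ncard ≤ k

/-- A set of edges is `k`-quasi-plane if it contains no `k` pairwise crossing edges. -/
def KQuasiPlane (k : ℕ) (E : Set (Sym2 Pt)) : Prop :=
  ¬ ∃ S : Finset (Sym2 Pt), ↑S ⊆ E ∧ S.card = k ∧
      (S : Set (Sym2 Pt)).Pairwise Cross

/-- The set of crossing pairs (unordered) of a set of edges. -/
def CrossPairs (E : Set (Sym2 Pt)) : Set (Sym2 (Sym2 Pt)) :=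
  {c | ∃ e ∈ E, ∃ f ∈ E, Cross e f ∧ c = s(e, f)}

/-- A crossing family in `K(P)`: a finite set of pairwise crossing edges of `K(P)`. -/
def CrossingFamily (P : Finset Pt) (S : Finset (Sym2 Pt)) : Prop :=
  ↑S ⊆ KEdges P ∧ (S : Set (Sym2 Pt)).Pairwise Cross

/-- `E` forms a spanning tree on the point set `P`: all edges are edges of `K(P)` and the
corresponding graph on the points of `P` is connected and acyclic. -/
def IsSpanningTreeOn (P : Finset Pt) (E : Set (Sym2 Pt)) : Prop :=
  E ⊆ KEdges P ∧
    (SimpleGraph.fromRel (fun a b : {x // x ∈ P} => s((a : Pt), (b : Pt)) ∈ E)).IsTree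

/-!
Number the points counterclockwise, so that the chords `(a, c)` and `(b, d)` cross as soon as
`a < b < c < d`, and assign this crossing to the inner chord `(b, c)`. A chord with `x` longer
edges at its right end and `y` at its left end thereby receives `x * y` crossings. Giving every
edge the charges `5, 2, 1, 0, 0, …` at its two ends, according to its rank there, covers `5` per
edge; on the other hand the charges of the edges that leave `i` to the right or `i + 1` to the left
are paid, up to `10`, by the crossings assigned to the side `(i, i + 1)`. Together with the `n`
sides this gives the linear bound `5 * e ≤ cr + 15 * n`.

Applied to the subgraph induced by a random set of points, which keeps every point independently
with probability `p`, the linear bound gives `5 * p ^ 2 * e ≤ p ^ 4 * cr + 15 * p * n` in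
expectation, and `p = 9 * n / (2 * e)` yields the cubic bound.
-/

open Finset

section Rank

variable {ι κ α M : Type*} [LinearOrder α] [AddCommMonoid M]

theorem sum_comp_card_filter_lt (w : ℕ → M) {s : Finset ι} {r : ι → α} (hr : Set.InjOn r s) :
    ∑ x ∈ s, w #{y ∈ s | r x < r y} = ∑ k ∈ range #s, w k := by
  classical
  induction s using Finset.induction_on_min_value r with
  | empty => simp
  | insert a s ha hmin ih =>
    have hlt : ∀ x ∈ s, r a < r x := fun x hx ↦ (hmin x hx).lt_of_ne fun h ↦
      ha (hr (mem_coe.2 (mem_insert_self a s)) (mem_coe.2 (mem_insert_of_mem hx)) h ▸ hx)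
    have hrank_min : #{y ∈ insert a s | r a < r y} = #s := by
      rw [filter_insert, if_neg (lt_irrefl _), filter_true_of_mem hlt]
    have hrank : ∀ x ∈ s, #{y ∈ insert a s | r x < r y} = #{y ∈ s | r x < r y} := fun x hx ↦ by
      rw [filter_insert, if_neg (hlt x hx).not_gt]
    rw [sum_insert ha, card_insert_of_notMem ha, sum_range_succ, hrank_min, add_comm,
      sum_congr rfl fun x hx ↦ congrArg w (hrank x hx),
      ih (hr.mono (coe_subset.2 (subset_insert a s)))]

theorem sum_comp_card_filter_fiber_lt [DecidableEq κ] (w : ℕ → M) {s : Finset ι} {t : Finset κ}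
    {φ : ι → κ} {r : ι → α} (hφ : ∀ x ∈ s, φ x ∈ t) (hr : Set.InjOn (fun x ↦ (φ x, r x)) s) :
    ∑ x ∈ s, w #{y ∈ s | φ y = φ x ∧ r x < r y} =
      ∑ i ∈ t, ∑ k ∈ range #{x ∈ s | φ x = i}, w k := by
  rw [← sum_fiberwise_of_maps_to hφ]
  refine sum_congr rfl fun i _ ↦ ?_
  have hri : Set.InjOn r ({x ∈ s | φ x = i} : Finset ι) := by
    intro x hx y hy hxy
    obtain ⟨hxs, rfl⟩ := mem_filter.1 hx
    obtain ⟨hys, hyφ⟩ := mem_filter.1 hy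
    exact hr hxs hys (Prod.ext hyφ.symm hxy)
  rw [← sum_comp_card_filter_lt w hri]
  refine sum_congr rfl fun x hx ↦ ?_
  rw [filter_filter, (mem_filter.1 hx).2]

end Rank

section Interlacing

variable {α : Type*} [LinearOrder α]

/-- The crossings of a graph drawn on a convex chain: here an edge `{i, j}` with `i < j` is the
pair `(i, j)`, and `(a, c)` crosses `(b, d)` when `a < b < c < d`. Every crossing is listed once,
the edge with the smaller left end first. -/
def interlacing (E : Finset (α × α)) : Finset ((α × α) × (α × α)) :=
  {x ∈ E ×ˢ E | x.1.1 < x.2.1 ∧ x.2.1 < x.1.2 ∧ x.1.2 < x.2.2}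

/-- The number of edges that leave the left end of the chord `c` and end to the right of `c`. -/
def outerRight (E : Finset (α × α)) (c : α × α) : ℕ :=
  #{f ∈ E | f.1 = c.1 ∧ c.2 < f.2}

/-- The number of edges that leave the right end of the chord `c` and end to the left of `c`. -/
def outerLeft (E : Finset (α × α)) (c : α × α) : ℕ :=
  #{f ∈ E | f.2 = c.2 ∧ f.1 < c.1}

theorem sum_outerLeft_mul_outerRight_le {M : Finset (α × α)} (E : Finset (α × α))
    (hM : ∀ c ∈ M, c.1 < c.2) :
    ∑ c ∈ M, outerLeft E c * outerRight E c ≤ #(interlacing E) := by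
  -- The crossing `a < b < c < d` is counted at its inner chord `(b, c)`.
  have hfiber : ∀ c ∈ M, outerLeft E c * outerRight E c =
      #{x ∈ interlacing E | (x.2.1, x.1.2) = c} := by
    rintro ⟨b, c⟩ hbc
    rw [outerLeft, outerRight, ← card_product]
    congr 1
    ext ⟨⟨a, c'⟩, ⟨b', d⟩⟩
    have := hM _ hbc
    simp only [mem_product, mem_filter, interlacing, Prod.mk.injEq]
    grind
  rw [sum_congr rfl hfiber, sum_card_fiberwise_eq_card_filter]
  exact card_filter_le _ _

theorem interlacing_mono {E F : Finset (α × α)} (h : E ⊆ F) : interlacing E ⊆ interlacing F :=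
  filter_subset_filter _ (product_subset_product h h)

end Interlacing

section Linear

/-- The charge that an edge receives at an end where `k` longer edges leave in the same direction.
The values are chosen to satisfy both `five_le_mul_add_charge` and
`sum_charge_add_sum_charge_le`. -/
def charge : ℕ → ℕ
  | 0 => 5
  | 1 => 2
  | 2 => 1
  | _ => 0

theorem five_le_mul_add_charge (a b : ℕ) : 5 ≤ a * b + charge a + charge b := by
  match a, b with
  | 0, _ => simp [charge]
  | _, 0 => simp [charge]
  | 1, 1 | 1, 2 | 2, 1 | 2, 2 => simp [charge]
  | 1, b + 3 | 2, b + 3 | a + 3, 1 | a + 3, 2 => simp only [charge]; omega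
  | a + 3, b + 3 => simp only [charge]; nlinarith

theorem sum_range_add_three_charge (m : ℕ) : ∑ k ∈ range (m + 3), charge k = 8 := by
  induction m with
  | zero => rfl
  | succ m ih => rw [Nat.add_right_comm, sum_range_succ, ih]; rfl

theorem sum_charge_add_sum_charge_le (l r : ℕ) :
    ∑ k ∈ range l, charge k + ∑ k ∈ range r, charge k ≤ l * r + 10 := by
  have hone : ∑ k ∈ range 1, charge k = 5 := rfl
  have htwo : ∑ k ∈ range 2, charge k = 7 := rfl
  match l, r with
  | 0, 0 | 0, 1 | 0, 2 | 1, 0 | 1, 1 | 1, 2 | 2, 0 | 2, 1 | 2, 2 => decide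
  | l + 3, 0 | l + 3, 1 | l + 3, 2 | 0, r + 3 | 1, r + 3 | 2, r + 3 =>
    simp only [sum_range_add_three_charge, sum_range_zero, hone, htwo]
    omega
  | l + 3, r + 3 =>
    simp only [sum_range_add_three_charge]
    nlinarith

variable {n : ℕ} {E : Finset (ℕ × ℕ)}

theorem sum_charge_outerRight (hE : ∀ e ∈ E, e.1 < n) :
    ∑ e ∈ E, charge (outerRight E e) =
      ∑ i ∈ range n, ∑ k ∈ range #{e ∈ E | e.1 = i}, charge k :=
  sum_comp_card_filter_fiber_lt charge (fun e he ↦ mem_range.2 (hE e he))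
    Function.injective_id.injOn

theorem sum_charge_outerLeft (hE : ∀ e ∈ E, 0 < e.2 ∧ e.2 ≤ n) :
    ∑ e ∈ E, charge (outerLeft E e) =
      ∑ i ∈ range n, ∑ k ∈ range #{e ∈ E | e.2 = i + 1}, charge k := by
  have hmaps : ∀ e ∈ E, e.2 ∈ (range n).image (· + 1) := fun e he ↦
    mem_image.2 ⟨e.2 - 1, mem_range.2 (by grind), by grind⟩
  have hsum := sum_comp_card_filter_fiber_lt charge hmaps (r := fun e ↦ OrderDual.toDual e.1)
    Prod.swap_injective.injOn
  exact hsum.trans (sum_image fun _ _ _ _ ↦ Nat.succ.inj)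

theorem sum_outerLeft_mul_outerRight_succ (hE : ∀ e ∈ E, e.1 + 1 < e.2) :
    ∑ c ∈ (range n).image (fun i ↦ (i, i + 1)), outerLeft E c * outerRight E c =
      ∑ i ∈ range n, #{e ∈ E | e.2 = i + 1} * #{e ∈ E | e.1 = i} := by
  rw [sum_image fun _ _ _ _ h ↦ (Prod.mk.inj h).1]
  refine sum_congr rfl fun i _ ↦ ?_
  have hleft : outerLeft E (i, i + 1) = #{e ∈ E | e.2 = i + 1} := by
    unfold outerLeft
    congr 1
    grind
  have hright : outerRight E (i, i + 1) = #{e ∈ E | e.1 = i} := by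
    unfold outerRight
    congr 1
    grind
  rw [hleft, hright]

theorem five_mul_card_le_card_interlacing_add_ten_mul (hE : ∀ e ∈ E, e.1 + 1 < e.2 ∧ e.2 < n) :
    5 * #E ≤ #(interlacing E) + 10 * n := by
  -- The sides are not in `E`, but the crossings with an inner chord in `H` pay for the charges.
  set H : Finset (ℕ × ℕ) := (range n).image fun i ↦ (i, i + 1)
  have hdisj : Disjoint E H := Finset.disjoint_left.2 fun e he hH ↦ by
    obtain ⟨i, -, rfl⟩ := mem_image.1 hH
    exact (hE _ he).1.false
  have hlt : ∀ c ∈ E ∪ H, c.1 < c.2 := by grind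
  have hlong : ∀ e ∈ E, e.1 + 1 < e.2 := fun e he ↦ (hE e he).1
  calc
    5 * #E = ∑ e ∈ E, 5 := by rw [sum_const, smul_eq_mul, mul_comm]
    _ ≤ ∑ e ∈ E, (outerLeft E e * outerRight E e + charge (outerLeft E e)
          + charge (outerRight E e)) := sum_le_sum fun e _ ↦ five_le_mul_add_charge _ _
    _ = ∑ e ∈ E, outerLeft E e * outerRight E e + ∑ i ∈ range n,
          (∑ k ∈ range #{e ∈ E | e.2 = i + 1}, charge k
            + ∑ k ∈ range #{e ∈ E | e.1 = i}, charge k) := by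
      simp only [sum_add_distrib]
      rw [sum_charge_outerLeft (n := n) (by grind), sum_charge_outerRight (n := n) (by grind),
        add_assoc]
    _ ≤ ∑ e ∈ E, outerLeft E e * outerRight E e + ∑ i ∈ range n,
          (#{e ∈ E | e.2 = i + 1} * #{e ∈ E | e.1 = i} + 10) :=
      Nat.add_le_add_left (sum_le_sum fun i _ ↦ sum_charge_add_sum_charge_le _ _) _
    _ = ∑ c ∈ E ∪ H, outerLeft E c * outerRight E c + 10 * n := by
      rw [sum_union hdisj, sum_outerLeft_mul_outerRight_succ hlong, sum_add_distrib, sum_const,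
        card_range, smul_eq_mul, mul_comm n, add_assoc]
    _ ≤ #(interlacing E) + 10 * n := by
      gcongr
      exact sum_outerLeft_mul_outerRight_le E hlt

theorem five_mul_card_le_card_interlacing_add (hE : ∀ e ∈ E, e.1 < e.2 ∧ e.2 < n) :
    5 * #E ≤ #(interlacing E) + 15 * n := by
  set L : Finset (ℕ × ℕ) := {e ∈ E | e.1 + 1 < e.2}
  have hshort : #{e ∈ E | ¬ e.1 + 1 < e.2} ≤ n := by
    rw [← card_range n]
    exact card_le_card_of_injOn Prod.fst (by grind [Set.MapsTo]) (by grind [Set.InjOn])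
  have hlong : 5 * #L ≤ #(interlacing L) + 10 * n :=
    five_mul_card_le_card_interlacing_add_ten_mul (by grind)
  have hmono : #(interlacing L) ≤ #(interlacing E) :=
    card_le_card (interlacing_mono (filter_subset _ _))
  have hsplit := card_filter_add_card_filter_not (s := E) fun e ↦ e.1 + 1 < e.2
  lia

end Linear

section Sampling

variable {ι κ : Type*} [DecidableEq ι] {P T : Finset ι}

/-- The probability that the random subset of `P` which keeps every point independently with
probability `p` equals `S`. -/
def bernoulliWeight (p : ℝ) (P S : Finset ι) : ℝ :=
  p ^ #S * (1 - p) ^ #(P \ S)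

theorem bernoulliWeight_nonneg {p : ℝ} (hp₀ : 0 ≤ p) (hp₁ : p ≤ 1) (P S : Finset ι) :
    0 ≤ bernoulliWeight p P S :=
  mul_nonneg (pow_nonneg hp₀ _) (pow_nonneg (sub_nonneg.2 hp₁) _)

theorem sum_bernoulliWeight_superset (p : ℝ) (hT : T ⊆ P) :
    ∑ S ∈ P.powerset with T ⊆ S, bernoulliWeight p P S = p ^ #T := by
  have hterm : ∀ S ∈ P.powerset, (if T ⊆ S then bernoulliWeight p P S else 0) =
      (∏ _i ∈ S, p) * ∏ i ∈ P \ S, if i ∈ T then 0 else 1 - p := by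
    intro S _
    split_ifs with hTS
    · have hsdiff : ∀ i ∈ P \ S, (if i ∈ T then 0 else 1 - p) = 1 - p := fun i hi ↦
        if_neg fun hiT ↦ (mem_sdiff.1 hi).2 (hTS hiT)
      rw [bernoulliWeight, prod_const, prod_congr rfl hsdiff, prod_const]
    · obtain ⟨i, hiT, hiS⟩ := not_subset.1 hTS
      have hzero : ∏ i ∈ P \ S, (if i ∈ T then 0 else 1 - p) = 0 :=
        prod_eq_zero (i := i) (mem_sdiff.2 ⟨hT hiT, hiS⟩) (if_pos hiT)
      rw [hzero, mul_zero]
  calc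
    _ = ∏ i ∈ P, (p + if i ∈ T then 0 else 1 - p) := by
      rw [sum_filter, sum_congr rfl hterm, prod_add]
    _ = ∏ i ∈ P, if i ∈ T then p else 1 := prod_congr rfl fun i _ ↦ by split_ifs <;> ring
    _ = p ^ #T := by rw [prod_ite_mem, inter_eq_right.2 hT, prod_const]

theorem sum_bernoulliWeight_mul_card {F : Finset κ} {T : κ → Finset ι} {k : ℕ} (p : ℝ)
    (hT : ∀ x ∈ F, T x ⊆ P) (hk : ∀ x ∈ F, #(T x) = k) :
    ∑ S ∈ P.powerset, bernoulliWeight p P S * #{x ∈ F | T x ⊆ S} = p ^ k * #F := by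
  calc
    _ = ∑ x ∈ F, ∑ S ∈ P.powerset with T x ⊆ S, bernoulliWeight p P S := by
      simp only [card_filter, Nat.cast_sum, Nat.cast_ite, Nat.cast_one, Nat.cast_zero, mul_sum,
        mul_ite, mul_one, mul_zero, sum_filter]
      exact sum_comm
    _ = ∑ _x ∈ F, p ^ k := sum_congr rfl fun x hx ↦ by
      rw [sum_bernoulliWeight_superset p (hT x hx), hk x hx]
    _ = p ^ k * #F := by rw [sum_const, nsmul_eq_mul, mul_comm]

end Sampling

section Plane

/-- Twice the signed area of the triangle `p q r`; it is positive exactly when the triangle is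
traversed counterclockwise. -/
def orient (p q r : Pt) : ℝ :=
  (q.1 - p.1) * (r.2 - p.2) - (q.2 - p.2) * (r.1 - p.1)

theorem orient_add_orient (a b c d : Pt) :
    orient b c d + orient a b d = orient a c d + orient a b c := by
  simp only [orient]
  ring

theorem orient_smul_add_orient_smul (a b c d : Pt) :
    orient b c d • a + orient a b d • c = orient a c d • b + orient a b c • d := by
  ext <;> simp only [orient, Prod.fst_add, Prod.smul_fst, Prod.snd_add, Prod.smul_snd,
    smul_eq_mul] <;> ring

theorem openSegment_inter_openSegment_nonempty {a b c d : Pt} (habc : 0 < orient a b c)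
    (hacd : 0 < orient a c d) (habd : 0 < orient a b d) (hbcd : 0 < orient b c d) :
    (openSegment ℝ a c ∩ openSegment ℝ b d).Nonempty := by
  have hpos : 0 < orient a c d + orient a b c := add_pos hacd habc
  refine ⟨(orient a c d + orient a b c)⁻¹ • (orient b c d • a + orient a b d • c), ?_, ?_⟩
  · rw [← orient_add_orient] at hpos ⊢
    exact ⟨_, _, mul_pos (inv_pos.2 hpos) hbcd, mul_pos (inv_pos.2 hpos) habd,
      by rw [← mul_add, inv_mul_cancel₀ hpos.ne'], by rw [smul_add, mul_smul, mul_smul]⟩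
  · rw [orient_smul_add_orient_smul]
    exact ⟨_, _, mul_pos (inv_pos.2 hpos) hacd, mul_pos (inv_pos.2 hpos) habc,
      by rw [← mul_add, inv_mul_cancel₀ hpos.ne'], by rw [smul_add, mul_smul, mul_smul]⟩

theorem mem_convexHull_of_orient_nonpos {a b c d : Pt} (habc : 0 ≤ orient a b c)
    (hacd : 0 ≤ orient a c d) (habd : 0 < orient a b d) (hbcd : orient b c d ≤ 0) :
    c ∈ convexHull ℝ {a, b, d} := by
  set w : Fin 3 → ℝ := fun i ↦
    (orient a b d)⁻¹ * ![-orient b c d, orient a c d, orient a b c] i with hw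
  have hc : c = ∑ i, w i • ![a, b, d] i := by
    simp only [hw, mul_smul, ← smul_sum]
    rw [eq_inv_smul_iff₀ habd.ne']
    simp only [Fin.sum_univ_three, Matrix.cons_val]
    rw [add_assoc, ← orient_smul_add_orient_smul]
    module
  rw [hc]
  refine (convex_convexHull ℝ _).sum_mem (fun i _ ↦ ?_) ?_ fun i _ ↦ subset_convexHull ℝ _ ?_
  · refine mul_nonneg (inv_nonneg.2 habd.le) ?_
    fin_cases i
    exacts [neg_nonneg.2 hbcd, hacd, habc]
  · rw [hw, ← mul_sum, inv_mul_eq_one₀ habd.ne']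
    simp only [Fin.sum_univ_three, Matrix.cons_val]
    linear_combination orient_add_orient a b c d
  · fin_cases i <;> simp

theorem collinear_of_orient_eq_zero {p q r : Pt} (h : orient p q r = 0) :
    Collinear ℝ {p, q, r} := by
  rcases eq_or_ne q p with rfl | hqp
  · simpa only [Set.insert_eq_of_mem, Set.mem_insert_iff, true_or] using collinear_pair ℝ q r
  have hdist : 0 < (q.1 - p.1) ^ 2 + (q.2 - p.2) ^ 2 := by
    by_contra! hle
    exact hqp (Prod.ext (by nlinarith) (by nlinarith))
  -- `r` is its own orthogonal projection to the line `p q`.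
  have hr : AffineMap.lineMap p q (((r.1 - p.1) * (q.1 - p.1) + (r.2 - p.2) * (q.2 - p.2)) /
      ((q.1 - p.1) ^ 2 + (q.2 - p.2) ^ 2)) = r := by
    rw [orient] at h
    rw [AffineMap.lineMap_apply]
    ext <;> simp only [vsub_eq_sub, vadd_eq_add, Prod.fst_add, Prod.smul_fst, Prod.fst_sub,
      Prod.snd_add, Prod.smul_snd, Prod.snd_sub, smul_eq_mul] <;> field_simp
    · linear_combination (q.2 - p.2) * h
    · linear_combination (p.1 - q.1) * h
  have hmem : r ∈ line[ℝ, p, q] := hr ▸ AffineMap.lineMap_mem_affineSpan_pair _ p q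
  rw [Set.pair_comm, Set.insert_comm]
  exact collinear_insert_of_mem_affineSpan_pair hmem

/-- The component of the vector from `p` to `q` in the direction `u`, up to the factor `‖u‖`. -/
def along (u p q : Pt) : ℝ :=
  u.1 * (q.1 - p.1) + u.2 * (q.2 - p.2)

/-- The tangent of the angle from the direction `u` to the vector from `p` to `q`. It orders the
points `q` with `0 < along u p q` counterclockwise around `p`. -/
noncomputable def polar (u p q : Pt) : ℝ :=
  (u.1 * (q.2 - p.2) - u.2 * (q.1 - p.1)) / along u p q

variable {u p q r : Pt}

theorem polar_sub_polar (hq : along u p q ≠ 0) (hr : along u p r ≠ 0) :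
    polar u p r - polar u p q =
      (u.1 ^ 2 + u.2 ^ 2) * orient p q r / (along u p r * along u p q) := by
  rw [polar, polar, div_sub_div _ _ hr hq]
  congr 1
  simp only [along, orient]
  ring

theorem sq_add_sq_pos_of_along_ne_zero (h : along u p q ≠ 0) : 0 < u.1 ^ 2 + u.2 ^ 2 := by
  by_contra! hle
  have h₁ : u.1 = 0 := by nlinarith
  have h₂ : u.2 = 0 := by nlinarith
  exact h (by rw [along, h₁, h₂, zero_mul, zero_mul, add_zero])

theorem polar_lt_polar_iff (hq : 0 < along u p q) (hr : 0 < along u p r) :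
    polar u p q < polar u p r ↔ 0 < orient p q r := by
  rw [← sub_pos, polar_sub_polar hq.ne' hr.ne', div_pos_iff_of_pos_right (mul_pos hr hq),
    mul_pos_iff_of_pos_left (sq_add_sq_pos_of_along_ne_zero hq.ne')]

theorem polar_eq_polar_iff (hq : 0 < along u p q) (hr : 0 < along u p r) :
    polar u p q = polar u p r ↔ orient p q r = 0 := by
  rw [eq_comm, ← sub_eq_zero, polar_sub_polar hq.ne' hr.ne', div_eq_zero_iff,
    or_iff_left (mul_pos hr hq).ne', mul_eq_zero,
    or_iff_right (sq_add_sq_pos_of_along_ne_zero hq.ne').ne']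

theorem exists_forall_along_pos {A : Set Pt} (hA : A.Finite) (hp : p ∉ convexHull ℝ A) :
    ∃ u, ∀ q ∈ A, 0 < along u p q := by
  obtain ⟨f, t, hpt, htA⟩ := geometric_hahn_banach_point_closed (convex_convexHull ℝ A)
    (hA.isClosed_convexHull ℝ) hp
  have hf : ∀ z : Pt, f z = f (1, 0) * z.1 + f (0, 1) * z.2 := fun z ↦ by
    have hz : z = z.1 • ((1 : ℝ), (0 : ℝ)) + z.2 • ((0 : ℝ), (1 : ℝ)) := by
      ext <;> simp
    conv_lhs => rw [hz, map_add, map_smul, map_smul, smul_eq_mul, smul_eq_mul]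
    ring
  refine ⟨(f (1, 0), f (0, 1)), fun q hq ↦ ?_⟩
  have hlt : f p < f q := hpt.trans (htA q (subset_convexHull ℝ A hq))
  rw [hf p, hf q] at hlt
  rw [along]
  linarith

end Plane

section Enumeration

theorem exists_bijOn_strictMonoOn {ι α : Type*} [LinearOrder α] [Nonempty ι] {P : Finset ι}
    {key : ι → α} (hkey : Set.InjOn key P) :
    ∃ g : ℕ → ι, Set.BijOn g (Set.Iio #P) P ∧ StrictMonoOn (key ∘ g) (Set.Iio #P) := by
  classical
  set rank : ι → ℕ := fun x ↦ #{y ∈ P | key y < key x}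
  have hrank_le : ∀ x y, key x ≤ key y → rank x ≤ rank y := fun x y hxy ↦
    card_le_card (monotone_filter_right P fun _ _ hz ↦ hz.trans_le hxy)
  have hrank_lt : ∀ x ∈ P, ∀ y, key x < key y → rank x < rank y := fun x hx y hxy ↦
    card_lt_card ((ssubset_iff_of_subset (monotone_filter_right P fun _ _ hz ↦ hz.trans hxy)).2
      ⟨x, mem_filter.2 ⟨hx, hxy⟩, fun hmem ↦ (mem_filter.1 hmem).2.false⟩)
  have hmaps : Set.MapsTo rank P (range #P) := fun x hx ↦
    mem_coe.2 (mem_range.2 (card_lt_card (filter_ssubset.2 ⟨x, hx, lt_irrefl _⟩)))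
  have hinj : Set.InjOn rank P := by
    intro x hx y hy hxy
    by_contra hne
    rcases (hkey.ne hx hy hne).lt_or_gt with hlt | hlt
    · exact (hrank_lt x hx y hlt).ne hxy
    · exact (hrank_lt y hy x hlt).ne' hxy
  have hbij : Set.BijOn rank P (Set.Iio #P) := by
    rw [← coe_range]
    exact ⟨hmaps, hinj, surjOn_of_injOn_of_card_le rank hmaps hinj (card_range _).le⟩
  have hinv := hbij.invOn_invFunOn
  refine ⟨Function.invFunOn rank P, hinv.symm.bijOn hbij.surjOn.mapsTo_invFunOn hbij.mapsTo, ?_⟩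
  intro i hi j hj hij
  by_contra! hle
  have hji := hrank_le _ _ hle
  rw [hinv.2 hi, hinv.2 hj] at hji
  exact hij.not_ge hji

namespace ConvexPos

variable {P S : Finset Pt} {p q r : Pt}

theorem mono (hP : ConvexPos P) (hS : S ⊆ P) : ConvexPos S :=
  ⟨fun _ hp _ hq _ hr ↦ hP.1 _ (hS hp) _ (hS hq) _ (hS hr), fun p hp hmem ↦
    hP.2 p (hS hp) (convexHull_mono (coe_subset.2 (erase_subset_erase p hS)) hmem)⟩

theorem orient_ne_zero (hP : ConvexPos P) (hp : p ∈ P) (hq : q ∈ P) (hr : r ∈ P) (hpq : p ≠ q)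
    (hpr : p ≠ r) (hqr : q ≠ r) : orient p q r ≠ 0 := fun h ↦
  hP.1 p hp q hq r hr hpq hpr hqr (collinear_of_orient_eq_zero h)

theorem exists_injOn_lt_imp_orient_pos (hP : ConvexPos P) (hp : p ∈ P) :
    ∃ θ : Pt → ℝ, Set.InjOn θ (P.erase p) ∧
      ∀ q ∈ P.erase p, ∀ r ∈ P.erase p, θ q < θ r → 0 < orient p q r := by
  obtain ⟨u, hu⟩ := exists_forall_along_pos (P.erase p).finite_toSet (hP.2 p hp)
  refine ⟨polar u p, fun q hq r hr hqr ↦ ?_, fun q hq r hr ↦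
    (polar_lt_polar_iff (hu q hq) (hu r hr)).1⟩
  by_contra hne
  obtain ⟨hqp, hqP⟩ := mem_erase.1 hq
  obtain ⟨hrp, hrP⟩ := mem_erase.1 hr
  exact hP.orient_ne_zero hp hqP hrP hqp.symm hrp.symm hne
    ((polar_eq_polar_iff (hu q hq) (hu r hr)).1 hqr)

theorem orient_pos_of_orient_pos {a b c d : Pt} (hP : ConvexPos P) (ha : a ∈ P) (hb : b ∈ P)
    (hc : c ∈ P) (hd : d ∈ P) (hca : a ≠ c) (hcb : b ≠ c) (hcd : d ≠ c) (habc : 0 < orient a b c)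
    (hacd : 0 < orient a c d) (habd : 0 < orient a b d) : 0 < orient b c d := by
  by_contra! hbcd
  refine hP.2 c hc (convexHull_mono ?_
    (mem_convexHull_of_orient_nonpos habc.le hacd.le habd hbcd))
  rintro x (rfl | rfl | rfl) <;> simp_all

theorem exists_counterclockwise_enum (hP : ConvexPos P) :
    ∃ g : ℕ → Pt, Set.BijOn g (Set.Iio #P) P ∧
      ∀ a b c, a < b → b < c → c < #P → 0 < orient (g a) (g b) (g c) := by
  classical
  rcases P.eq_empty_or_nonempty with rfl | ⟨p, hp⟩
  · exact ⟨fun _ ↦ 0, by simp, by simp⟩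
  obtain ⟨θ, hθ, horient⟩ := hP.exists_injOn_lt_imp_orient_pos hp
  let key : Pt → WithBot ℝ := fun q ↦ if q = p then ⊥ else θ q
  have hkey : Set.InjOn key P := by
    intro q hq r hr hqr
    by_cases hqp : q = p <;> by_cases hrp : r = p
    · exact hqp.trans hrp.symm
    · simp [key, hqp, hrp] at hqr
    · simp [key, hqp, hrp] at hqr
    · exact hθ (mem_erase.2 ⟨hqp, hq⟩) (mem_erase.2 ⟨hrp, hr⟩) (by simpa [key, hqp, hrp] using hqr)
  obtain ⟨g, hg, hmono⟩ := exists_bijOn_strictMonoOn hkey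
  refine ⟨g, hg, fun a b c hab hbc hc ↦ ?_⟩
  have hlt : ∀ i j, i < j → j < #P → key (g i) < key (g j) := fun i j hij hj ↦
    hmono (hij.trans hj) hj hij
  have hne : ∀ i j, i < j → j < #P → g i ≠ g j := fun i j hij hj h ↦
    (hlt i j hij hj).ne (congrArg key h)
  have hp_orient : ∀ i j, g i ≠ p → i < j → j < #P → 0 < orient p (g i) (g j) := by
    intro i j hi hij hj
    have hjp : g j ≠ p := fun h ↦ by simpa [key, h] using hlt i j hij hj
    refine horient _ (mem_erase.2 ⟨hi, hg.mapsTo (hij.trans hj)⟩) _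
      (mem_erase.2 ⟨hjp, hg.mapsTo hj⟩) ?_
    simpa [key, hi, hjp] using hlt i j hij hj
  have hb : g b ≠ p := fun h ↦ by simpa [key, h] using hlt a b hab (hbc.trans hc)
  by_cases ha : g a = p
  · rw [ha]
    exact hp_orient b c hb hbc hc
  · exact hP.orient_pos_of_orient_pos hp (hg.mapsTo (hab.trans (hbc.trans hc)))
      (hg.mapsTo (hbc.trans hc)) (hg.mapsTo hc) hb.symm (hne a b hab (hbc.trans hc))
      (hne b c hbc hc).symm (hp_orient a b ha hab (hbc.trans hc)) (hp_orient b c hb hbc hc)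
      (hp_orient a c ha (hab.trans hbc) hc)

end ConvexPos

end Enumeration

section Transfer

theorem injOn_sym2_mk {α β : Type*} {g : α → β} {s : Set α} (hg : Set.InjOn g s)
    (r : α → α → Prop) [Std.Asymm r] :
    Set.InjOn (fun e : α × α ↦ s(g e.1, g e.2)) {e | e.1 ∈ s ∧ e.2 ∈ s ∧ r e.1 e.2} := by
  rintro ⟨a, b⟩ ⟨ha, hb, hab⟩ ⟨c, d⟩ ⟨hc, hd, hcd⟩ h
  rcases Sym2.eq_iff.1 h with ⟨hac, hbd⟩ | ⟨had, hbc⟩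
  · exact Prod.ext (hg ha hc hac) (hg hb hd hbd)
  · obtain rfl := hg ha hd had
    obtain rfl := hg hb hc hbc
    exact absurd hcd (asymm hab)

open Classical in
/-- The edges of `E` between the points `g 0, …, g (n - 1)`, each listed by the increasing pair of
the indices of its endpoints. -/
noncomputable def chordPairs {V : Type*} (g : ℕ → V) (n : ℕ) (E : Set (Sym2 V)) :
    Finset (ℕ × ℕ) :=
  {e ∈ range n ×ˢ range n | e.1 < e.2 ∧ s(g e.1, g e.2) ∈ E}

theorem mem_chordPairs {V : Type*} {g : ℕ → V} {n : ℕ} {E : Set (Sym2 V)} {e : ℕ × ℕ} :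
    e ∈ chordPairs g n E ↔ e.1 < e.2 ∧ e.2 < n ∧ s(g e.1, g e.2) ∈ E := by
  simp only [chordPairs, mem_filter, mem_product, mem_range]
  exact ⟨fun h ↦ ⟨h.2.1, h.1.2, h.2.2⟩, fun h ↦ ⟨⟨h.1.trans h.2.1, h.2.1⟩, h.1, h.2.2⟩⟩

variable {P : Finset Pt} {E : Set (Sym2 Pt)} {g : ℕ → Pt}

theorem finite_kEdges (P : Finset Pt) : (KEdges P).Finite := by
  refine P.sym2.finite_toSet.subset ?_
  rintro _ ⟨p, hp, q, hq, -, rfl⟩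
  exact mk_mem_sym2_iff.2 ⟨hp, hq⟩

theorem finite_crossPairs (hE : E.Finite) : (CrossPairs E).Finite := by
  refine hE.toFinset.sym2.finite_toSet.subset ?_
  rintro _ ⟨e, he, f, hf, -, rfl⟩
  exact mk_mem_sym2_iff.2 ⟨hE.mem_toFinset.2 he, hE.mem_toFinset.2 hf⟩

theorem ncard_le_card_chordPairs (hg : Set.SurjOn g (Set.Iio #P) P) (hE : E ⊆ KEdges P) :
    E.ncard ≤ #(chordPairs g #P E) := by
  have hsurj : E ⊆ (chordPairs g #P E).image fun e ↦ s(g e.1, g e.2) := by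
    intro e he
    obtain ⟨p, hp, q, hq, hpq, rfl⟩ := hE he
    obtain ⟨i, hi, rfl⟩ := hg hp
    obtain ⟨j, hj, rfl⟩ := hg hq
    rw [coe_image]
    rcases lt_trichotomy i j with hij | rfl | hji
    · exact ⟨(i, j), mem_chordPairs.2 ⟨hij, hj, he⟩, rfl⟩
    · exact absurd rfl hpq
    · exact ⟨(j, i), mem_chordPairs.2 ⟨hji, hi, Sym2.eq_swap ▸ he⟩, Sym2.eq_swap⟩
  calc
    E.ncard ≤ #((chordPairs g #P E).image fun e ↦ s(g e.1, g e.2)) := by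
      rw [← Set.ncard_coe_finset]
      exact Set.ncard_le_ncard hsurj
    _ ≤ #(chordPairs g #P E) := card_image_le

theorem cross_of_lt {n a b c d : ℕ} (hg : Set.InjOn g (Set.Iio n))
    (horient : ∀ a b c, a < b → b < c → c < n → 0 < orient (g a) (g b) (g c))
    (hab : a < b) (hbc : b < c) (hcd : c < d) (hd : d < n) :
    Cross s(g a, g c) s(g b, g d) := by
  have hc := hcd.trans hd
  have hb := hbc.trans hc
  refine ⟨?_, _, _, _, _, rfl, rfl, openSegment_inter_openSegment_nonempty
    (horient a b c hab hbc hc) (horient a c d (hab.trans hbc) hcd hd)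
    (horient a b d hab (hbc.trans hcd) hd) (horient b c d hbc hcd hd)⟩
  have hne : ∀ i j, i < j → j < n → g i ≠ g j := fun i j hij hj h ↦
    hij.ne (hg (hij.trans hj) hj h)
  intro x hx
  rcases Sym2.mem_iff.1 hx with rfl | rfl <;> rw [Sym2.mem_iff, not_or]
  · exact ⟨hne a b hab hb, hne a d (hab.trans (hbc.trans hcd)) hd⟩
  · exact ⟨(hne b c hbc hc).symm, hne c d hcd hd⟩

theorem card_interlacing_chordPairs_le {n : ℕ} (hE : E.Finite) (hg : Set.InjOn g (Set.Iio n))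
    (horient : ∀ a b c, a < b → b < c → c < n → 0 < orient (g a) (g b) (g c)) :
    #(interlacing (chordPairs g n E)) ≤ (CrossPairs E).ncard := by
  let edge : ℕ × ℕ → Sym2 Pt := fun e ↦ s(g e.1, g e.2)
  have hchord : Set.InjOn edge (chordPairs g n E) :=
    (injOn_sym2_mk hg (· < ·)).mono fun e he ↦ by
      obtain ⟨hlt, hn, -⟩ := mem_chordPairs.1 he
      exact ⟨hlt.trans hn, hn, hlt⟩
  have hpair : Set.InjOn (fun x : (ℕ × ℕ) × (ℕ × ℕ) ↦ s(edge x.1, edge x.2))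
      (interlacing (chordPairs g n E)) :=
    (injOn_sym2_mk hchord fun e f ↦ e.1 < f.1).mono fun x hx ↦ by
      obtain ⟨hxE, hlt, -⟩ := mem_filter.1 hx
      exact ⟨(mem_product.1 hxE).1, (mem_product.1 hxE).2, hlt⟩
  rw [← Set.ncard_coe_finset]
  refine Set.ncard_le_ncard_of_injOn _ (fun x hx ↦ ?_) hpair (finite_crossPairs hE)
  obtain ⟨hxE, h₁, h₂, h₃⟩ := mem_filter.1 hx
  obtain ⟨hac, hbd⟩ := mem_product.1 hxE
  exact ⟨_, (mem_chordPairs.1 hac).2.2, _, (mem_chordPairs.1 hbd).2.2,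
    cross_of_lt hg horient h₁ h₂ h₃ (mem_chordPairs.1 hbd).2.1, rfl⟩

theorem ConvexPos.five_mul_ncard_le (hP : ConvexPos P) (hE : E ⊆ KEdges P) :
    5 * E.ncard ≤ (CrossPairs E).ncard + 15 * #P := by
  obtain ⟨g, hg, horient⟩ := hP.exists_counterclockwise_enum
  calc
    5 * E.ncard ≤ 5 * #(chordPairs g #P E) :=
      Nat.mul_le_mul_left 5 (ncard_le_card_chordPairs hg.surjOn hE)
    _ ≤ #(interlacing (chordPairs g #P E)) + 15 * #P :=
      five_mul_card_le_card_interlacing_add fun e he ↦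
        ⟨(mem_chordPairs.1 he).1, (mem_chordPairs.1 he).2.1⟩
    _ ≤ (CrossPairs E).ncard + 15 * #P := Nat.add_le_add_right
      (card_interlacing_chordPairs_le ((finite_kEdges P).subset hE) hg.injOn horient) _

end Transfer

section RandomSubgraph

variable {P S : Finset Pt} {F : Finset (Sym2 Pt)}

/-- The set of the endpoints of a pair of edges: the crossing `c` survives in the subgraph induced
by `S` exactly when `crossingSupport c ⊆ S`. -/
def crossingSupport {V : Type*} [DecidableEq V] (c : Sym2 (Sym2 V)) : Finset V :=
  c.toFinset.biUnion Sym2.toFinset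

theorem crossingSupport_mk {V : Type*} [DecidableEq V] (e f : Sym2 V) :
    crossingSupport s(e, f) = e.toFinset ∪ f.toFinset := by
  rw [crossingSupport, Sym2.toFinset_mk_eq, biUnion_insert, singleton_biUnion]

theorem toFinset_subset_of_mem_kEdges {e : Sym2 Pt} (he : e ∈ KEdges P) : e.toFinset ⊆ P := by
  obtain ⟨p, hp, q, hq, -, rfl⟩ := he
  rw [Sym2.toFinset_mk_eq, insert_subset_iff, singleton_subset_iff]
  exact ⟨hp, hq⟩

theorem card_toFinset_of_mem_kEdges {e : Sym2 Pt} (he : e ∈ KEdges P) : #e.toFinset = 2 := by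
  obtain ⟨p, -, q, -, hpq, rfl⟩ := he
  exact Sym2.card_toFinset_of_not_isDiag _ hpq

theorem crossingSupport_subset {c : Sym2 (Sym2 Pt)} (hF : (F : Set (Sym2 Pt)) ⊆ KEdges P)
    (hc : c ∈ CrossPairs F) : crossingSupport c ⊆ P := by
  obtain ⟨e, he, f, hf, -, rfl⟩ := hc
  rw [crossingSupport_mk]
  exact union_subset (toFinset_subset_of_mem_kEdges (hF he)) (toFinset_subset_of_mem_kEdges (hF hf))

theorem card_crossingSupport {c : Sym2 (Sym2 Pt)} (hF : (F : Set (Sym2 Pt)) ⊆ KEdges P)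
    (hc : c ∈ CrossPairs F) : #(crossingSupport c) = 4 := by
  obtain ⟨e, he, f, hf, hcross, rfl⟩ := hc
  have hdisj : Disjoint e.toFinset f.toFinset := Finset.disjoint_left.2 fun x hxe hxf ↦
    hcross.1 x (Sym2.mem_toFinset.1 hxe) (Sym2.mem_toFinset.1 hxf)
  rw [crossingSupport_mk, card_union_of_disjoint hdisj, card_toFinset_of_mem_kEdges (hF he),
    card_toFinset_of_mem_kEdges (hF hf)]

namespace ConvexPos

theorem five_mul_card_filter_subset_le {C : Finset (Sym2 (Sym2 Pt))} (hP : ConvexPos P)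
    (hF : (F : Set (Sym2 Pt)) ⊆ KEdges P) (hC : CrossPairs (F : Set (Sym2 Pt)) ⊆ C) (hS : S ⊆ P) :
    5 * #{e ∈ F | e.toFinset ⊆ S} ≤ #{c ∈ C | crossingSupport c ⊆ S} + 15 * #S := by
  set FS : Finset (Sym2 Pt) := {e ∈ F | e.toFinset ⊆ S}
  have hedges : (FS : Set (Sym2 Pt)) ⊆ KEdges S := by
    intro e he
    obtain ⟨heF, heS⟩ := mem_filter.1 he
    obtain ⟨p, -, q, -, hpq, rfl⟩ := hF heF
    exact ⟨p, heS (by simp), q, heS (by simp), hpq, rfl⟩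
  have hcross : CrossPairs FS ⊆ ({c ∈ C | crossingSupport c ⊆ S} : Finset _) := by
    rintro _ ⟨e, he, f, hf, hef, rfl⟩
    obtain ⟨heF, heS⟩ := mem_filter.1 he
    obtain ⟨hfF, hfS⟩ := mem_filter.1 hf
    refine mem_filter.2 ⟨hC ⟨e, heF, f, hfF, hef, rfl⟩, ?_⟩
    rw [crossingSupport_mk]
    exact union_subset heS hfS
  have hlinear := (hP.mono hS).five_mul_ncard_le hedges
  rw [Set.ncard_coe_finset] at hlinear
  refine hlinear.trans (Nat.add_le_add_right ?_ _)
  rw [← Set.ncard_coe_finset]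
  exact Set.ncard_le_ncard hcross

theorem five_mul_sq_mul_ncard_le {E : Set (Sym2 Pt)} {p : ℝ} (hP : ConvexPos P)
    (hE : E ⊆ KEdges P) (hp₀ : 0 ≤ p) (hp₁ : p ≤ 1) :
    5 * (p ^ 2 * E.ncard) ≤ p ^ 4 * (CrossPairs E).ncard + 15 * (p * #P) := by
  have hfin : E.Finite := (finite_kEdges P).subset hE
  obtain ⟨F, rfl⟩ := hfin.exists_finset_coe
  obtain ⟨C, hC⟩ := (finite_crossPairs hfin).exists_finset_coe
  have hsub (S) (hS : S ∈ P.powerset) : 5 * (bernoulliWeight p P S * #{e ∈ F | e.toFinset ⊆ S}) ≤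
      bernoulliWeight p P S * #{c ∈ C | crossingSupport c ⊆ S} +
        15 * (bernoulliWeight p P S * #{x ∈ P | {x} ⊆ S}) := by
    have hS := mem_powerset.1 hS
    have hpoints : #{x ∈ P | {x} ⊆ S} = #S := by
      simp only [singleton_subset_iff, filter_mem_eq_inter, inter_eq_right.2 hS]
    have hlinear : (5 : ℝ) * #{e ∈ F | e.toFinset ⊆ S} ≤
        #{c ∈ C | crossingSupport c ⊆ S} + 15 * #S := mod_cast
      hP.five_mul_card_filter_subset_le hE hC.superset hS
    rw [hpoints]
    have hweighted := mul_le_mul_of_nonneg_left hlinear (bernoulliWeight_nonneg hp₀ hp₁ P S)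
    linarith
  have hsum := sum_le_sum hsub
  have hmemC : ∀ c ∈ C, c ∈ CrossPairs (F : Set (Sym2 Pt)) := fun c hc ↦ hC ▸ mem_coe.2 hc
  rw [sum_add_distrib, ← mul_sum, ← mul_sum,
    sum_bernoulliWeight_mul_card p (fun e he ↦ toFinset_subset_of_mem_kEdges (hE he))
      (fun e he ↦ card_toFinset_of_mem_kEdges (hE he)),
    sum_bernoulliWeight_mul_card p (fun c hc ↦ crossingSupport_subset hE (hmemC c hc))
      (fun c hc ↦ card_crossingSupport hE (hmemC c hc)),
    sum_bernoulliWeight_mul_card p (fun x hx ↦ singleton_subset_iff.2 hx)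
      (fun x _ ↦ card_singleton x), pow_one] at hsum
  rwa [← hC, Set.ncard_coe_finset, Set.ncard_coe_finset]

end ConvexPos

end RandomSubgraph

theorem cube_div_sq_le_of_forall_prob {n e q : ℝ} (hn : 0 < n) (he : 9 / 2 * n ≤ e)
    (h : ∀ p : ℝ, 0 ≤ p → p ≤ 1 → 5 * (p ^ 2 * e) ≤ p ^ 4 * q + 15 * (p * n)) :
    20 / 243 * e ^ 3 / n ^ 2 ≤ q := by
  have he₀ : 0 < e := by linarith
  -- For this value of `p` the lower bound for `q` in `h` is largest.
  set p := 9 * n / (2 * e) with hp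
  have hp₀ : 0 < p := by positivity
  have hp₁ : p ≤ 1 := (div_le_one (by positivity)).2 (by linarith)
  have hbound := h p hp₀.le hp₁
  have hident : p ^ 4 * (20 / 243 * e ^ 3 / n ^ 2) = 5 * (p ^ 2 * e) - 15 * (p * n) := by
    rw [hp]
    field_simp
    ring
  refine le_of_mul_le_mul_left ?_ (pow_pos hp₀ 4)
  linarith

/-- convex crossing lemma: a convex geometric graph on `n` vertices with
`e ≥ (9/2)·n` edges has at least `(20/243)·e³/n²` crossings. -/
theorem stmt_7 (n : ℕ) (P : Finset Pt) (hP : ConvexPos P) (hcard : P.card = n)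
    (E : Set (Sym2 Pt)) (hE : E ⊆ KEdges P)
    (he : (9 : ℝ) / 2 * n ≤ (E.ncard : ℝ)) :
    (20 : ℝ) / 243 * (E.ncard : ℝ) ^ 3 / (n : ℝ) ^ 2 ≤ ((CrossPairs E).ncard : ℝ) := by
  subst hcard
  rcases P.eq_empty_or_nonempty with rfl | hne
  · simp
  · exact cube_div_sq_le_of_forall_prob (Nat.cast_pos.2 hne.card_pos) he fun p hp₀ hp₁ ↦
      hP.five_mul_sq_mul_ncard_le hE hp₀ hp₁
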